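/- arXiv:2511.05994 — 7 statements merged into one kernel-verified Lean document; each statement's English description precedes it below -/
import Mathlib

section
/- Let Λ be a real number and let F : ℝ → ℝ be differentiable on (-∞, 0). Then F satisfies T·F'(T) − F(T)/2 = Λ for all T < 0 if and only if there exists a real constant α such that F(T) = −2Λ + α·√(−T) for all T < 0. -/
/-- ΛCDM reconstruction in f(𝕋) gravity: F satisfies T·F'(T) − F(T)/2 = Λ on (-∞,0)
iff F(T) = −2Λ + α√(−T) there. -/
theorem stmt_0 (Λ : ℝ) (F : ℝ → ℝ) (hF : DifferentiableOn ℝ F (Set.Iio 0)) :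
    (∀ T < 0, T * deriv F T - F T / 2 = Λ) ↔
      ∃ α : ℝ, ∀ T < 0, F T = -2 * Λ + α * Real.sqrt (-T) := by
  have hs : ∀ T : ℝ, T < 0 →
      HasDerivAt (fun x : ℝ => Real.sqrt (-x)) (-1 / (2 * Real.sqrt (-T))) T := by
    intro T hT
    exact (hasDerivAt_neg T).sqrt (by linarith)
  constructor
  · intro h
    have hG : ∀ T : ℝ, T < 0 →
        HasDerivAt (fun x : ℝ => (F x + 2 * Λ) / Real.sqrt (-x)) 0 T := by
      intro T hT
      have hd : HasDerivAt F (deriv F T) T :=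
        ((hF T hT).differentiableAt (Iio_mem_nhds hT)).hasDerivAt
      have hp : 0 < Real.sqrt (-T) := Real.sqrt_pos.mpr (by linarith)
      have hq : Real.sqrt (-T) ^ 2 = -T := Real.sq_sqrt (by linarith)
      have h1 := (hd.add_const (2 * Λ)).div (hs T hT) hp.ne'
      refine h1.congr_deriv ?_
      have h2 := h T hT
      rw [div_eq_zero_iff]
      left
      field_simp
      rw [hq]
      linarith
    obtain ⟨a, hc⟩ := isOpen_Iio.exists_is_const_of_deriv_eq_zero (isPreconnected_Iio (a := (0 : ℝ)))
      (fun T hT => (hG T hT).differentiableAt.differentiableWithinAt)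
      (fun T hT => (hG T hT).deriv)
    refine ⟨a, fun T hT => ?_⟩
    have hp : 0 < Real.sqrt (-T) := Real.sqrt_pos.mpr (by linarith)
    have h3 := hc T hT
    rw [← h3, div_mul_cancel₀ _ hp.ne']
    ring
  · rintro ⟨α, h⟩ T hT
    have hp : 0 < Real.sqrt (-T) := Real.sqrt_pos.mpr (by linarith)
    have hq : Real.sqrt (-T) ^ 2 = -T := Real.sq_sqrt (by linarith)
    have he : F =ᶠ[nhds T] fun x => -2 * Λ + α * Real.sqrt (-x) := by
      filter_upwards [Iio_mem_nhds hT] with x hx using h x hx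
    have hd := (((hs T hT).const_mul α).const_add (-2 * Λ)).congr_of_eventuallyEq he
    rw [hd.deriv, h T hT]
    have hT' : T = -Real.sqrt (-T) ^ 2 := by linarith
    generalize Real.sqrt (-T) = s at *
    subst hT'
    field_simp
    ring
end

section
/- Let g, h : ℝ → ℝ be differentiable on (-∞, 0) and let H : ℝ → ℝ be differentiable with H(t) ≠ 0 for all t, and suppose H' exists. Define 𝕋(t) = −6·H(t)² and B(t) = −6·(H'(t) + 3·H(t)²), and define F_𝕋(t) = g'(𝕋(t)) + B(t)·h'(𝕋(t)), F(t) = g(𝕋(t)) + B(t)·h(𝕋(t)), F_B(t) = h(𝕋(t)). Then for every t, the dark-energy density ρ_DE(t) := 𝕋(t)·F_𝕋(t) − F(t)/2 + (1/2)·F_B(t)·B(t) + 3·H(t)·(d/dt)[h(𝕋(t))] equals 𝕋(t)·g'(𝕋(t)) − g(𝕋(t))/2 + 3·𝕋(t)²·h'(𝕋(t)). -/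
/-- In f(𝕋,B) gravity with the ansatz F(𝕋,B) = g(𝕋) + B·h(𝕋), the dark-energy density
ρ_DE = 𝕋F_𝕋 − F/2 + (1/2)F_B·B + 3H·(d/dt)F_B reduces to 𝕋g'(𝕋) − g(𝕋)/2 + 3𝕋²h'(𝕋). -/
theorem stmt_1 (g h H : ℝ → ℝ)
    (hg : DifferentiableOn ℝ g (Set.Iio 0))
    (hh : DifferentiableOn ℝ h (Set.Iio 0))
    (hH : Differentiable ℝ H)
    (hHne : ∀ t, H t ≠ 0)
    (T B : ℝ → ℝ)
    (hT : ∀ t, T t = -6 * H t ^ 2)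
    (hB : ∀ t, B t = -6 * (deriv H t + 3 * H t ^ 2)) :
    ∀ t, T t * (deriv g (T t) + B t * deriv h (T t))
        - (g (T t) + B t * h (T t)) / 2
        + (1 / 2) * h (T t) * B t
        + 3 * H t * deriv (fun s => h (T s)) t
      = T t * deriv g (T t) - g (T t) / 2 + 3 * (T t) ^ 2 * deriv h (T t) := by
  intro t
  have hneg : T t < 0 := by
    have := pow_pos (abs_pos.mpr (hHne t)) 2
    rw [sq_abs] at this
    rw [hT]
    linarith
  have hdT : HasDerivAt T (-6 * (2 * H t * deriv H t)) t := by
    have h1 := ((hH t).hasDerivAt.pow 2).const_mul (-6 : ℝ)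
    have h2 : T = fun s => -6 * H s ^ 2 := funext hT
    rw [h2]
    have e : (-6 * (2 * H t * deriv H t) : ℝ)
        = -6 * (((2 : ℕ) : ℝ) * H t ^ (2 - 1) * deriv H t) := by norm_num
    rw [e]
    exact h1
  have hdh : HasDerivAt h (deriv h (T t)) (T t) :=
    (hh.differentiableAt (Iio_mem_nhds hneg)).hasDerivAt
  have hc : deriv (fun s => h (T s)) t = deriv h (T t) * (-6 * (2 * H t * deriv H t)) :=
    (hdh.comp t hdT).deriv
  rw [hc]
  generalize deriv h (T t) = a
  generalize deriv g (T t) = b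
  generalize h (T t) = c
  generalize g (T t) = d
  rw [hB, hT]
  ring
end

section
/- Let Λ be a real number and let H : ℝ → ℝ be differentiable with H(t) ≠ 0 for all t. Define 𝕋(t) = −6·H(t)², B(t) = −6·(H'(t) + 3·H(t)²), and consider the model with g = 0 and h(T) = −Λ/(3T), i.e. F(t) = B(t)·h(𝕋(t)), F_𝕋(t) = B(t)·h'(𝕋(t)), F_B(t) = h(𝕋(t)). Then for every t, 𝕋(t)·F_𝕋(t) − F(t)/2 + (1/2)·F_B(t)·B(t) + 3·H(t)·(d/dt)[h(𝕋(t))] = Λ. -/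
/-- The model f(𝕋,B) = 𝕋 − ΛB/(3𝕋), i.e. g = 0 and h(T) = −Λ/(3T), has dark energy
density identically Λ for any Hubble function H. -/
theorem stmt_3 (Λ : ℝ) (H : ℝ → ℝ) (hH : Differentiable ℝ H) (hHne : ∀ t, H t ≠ 0)
    (T B h : ℝ → ℝ)
    (hT : ∀ t, T t = -6 * H t ^ 2)
    (hB : ∀ t, B t = -6 * (deriv H t + 3 * H t ^ 2))
    (hh : h = fun x => -Λ / (3 * x)) :
    ∀ t, T t * (B t * deriv h (T t)) - (B t * h (T t)) / 2
        + (1 / 2) * h (T t) * B t + 3 * H t * deriv (fun s => h (T s)) t = Λ := by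
  intro t
  have hne := hHne t
  have hTne : T t ≠ 0 := by
    rw [hT]
    exact mul_ne_zero (by norm_num) (pow_ne_zero _ hne)
  have hd : ∀ x : ℝ, x ≠ 0 → HasDerivAt h (Λ / (3 * x ^ 2)) x := by
    intro x hx
    rw [hh]
    have h1 : HasDerivAt (fun y : ℝ => 3 * y) (3 * 1) x := (hasDerivAt_id x).const_mul 3
    have h2 := (hasDerivAt_const x (-Λ)).fun_div h1 (mul_ne_zero (by norm_num) hx)
    refine h2.congr_deriv ?_
    field_simp
    ring
  have hTd : HasDerivAt T (-6 * (2 * H t * deriv H t)) t := by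
    have h1 := ((hH t).hasDerivAt.fun_pow 2).const_mul (-6)
    rw [show T = fun s => -6 * H s ^ 2 from funext hT]
    refine h1.congr_deriv ?_
    norm_num
  have hc : deriv (fun s => h (T s)) t = Λ / (3 * T t ^ 2) * (-6 * (2 * H t * deriv H t)) :=
    ((hd _ hTne).comp t hTd).deriv
  rw [hc, (hd _ hTne).deriv, hB, hT]
  field_simp
  ring
end

section
/- Let Λ > 0 and α be real numbers. Define g(T) = (α−1)·T and h(T) = −(1/3)·(Λ/T + ((α−1)/2)·log(−T/Λ)) for T < 0. Then for every T < 0, T·g'(T) − g(T)/2 + 3·T²·h'(T) = Λ. -/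
/-- The family g(T) = (α−1)T, h(T) = −(1/3)(Λ/T + ((α−1)/2)log(−T/Λ)) solves the
f(𝕋,B) reconstruction equation T·g'(T) − g(T)/2 + 3T²h'(T) = Λ for all T < 0. -/
theorem stmt_4 (Λ α : ℝ) (hΛ : 0 < Λ)
    (g h : ℝ → ℝ)
    (hg : g = fun T => (α - 1) * T)
    (hh : h = fun T => -(1 / 3) * (Λ / T + ((α - 1) / 2) * Real.log (-T / Λ))) :
    ∀ T < 0, T * deriv g T - g T / 2 + 3 * T ^ 2 * deriv h T = Λ := by
  intro T hT
  have hT0 : T ≠ 0 := hT.ne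
  have hΛ0 : Λ ≠ 0 := hΛ.ne'
  have hq : -T / Λ ≠ 0 := div_ne_zero (neg_ne_zero.mpr hT0) hΛ0
  have dg : HasDerivAt g ((α - 1) * 1) T := by
    rw [hg]
    exact (hasDerivAt_id T).const_mul (α - 1)
  have d1 : HasDerivAt (fun T : ℝ => Λ / T) ((0 * T - Λ * 1) / T ^ 2) T :=
    (hasDerivAt_const T Λ).div (hasDerivAt_id T) hT0
  have d2 : HasDerivAt (fun T : ℝ => Real.log (-T / Λ)) ((-1 / Λ) / (-T / Λ)) T :=
    ((hasDerivAt_id T).neg.div_const Λ).log hq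
  have dh : HasDerivAt h (-(1 / 3) * ((0 * T - Λ * 1) / T ^ 2
      + ((α - 1) / 2) * ((-1 / Λ) / (-T / Λ)))) T := by
    rw [hh]
    exact (d1.add (d2.const_mul ((α - 1) / 2))).const_mul (-(1 / 3))
  rw [dg.deriv, dh.deriv, hg]
  field_simp
  ring
end

section
/- Let k > 0, M > 0, R > 0. Suppose A, B : (R,∞) → ℝ are differentiable, B(r) + r·B'(r) = 0 for all r > R, B(r) → k·M/(3π·R) as r → R⁺, 4·r·c'(r) = B(r) + r·A'(r) for all r > R where c(r) = k·M/(12π·r), and A(r) → 0 as r → ∞. Then for all r > R, B(r) = k·M/(3π·r) and A(r) = 2·k·M/(3π·r); in particular A(r) = 2·B(r), so the Eddington parameter γ = B(r)·r / (A(r)·r) equals 1/2. -/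
open Filter

theorem const_on_Ioi (R : ℝ) (f : ℝ → ℝ) (hf : ∀ r > R, HasDerivAt f 0 r) :
    ∀ x > R, ∀ y > R, f x = f y := by
  intro x hx y hy
  exact isOpen_Ioi.is_const_of_deriv_eq_zero (s := Set.Ioi R) (convex_Ioi R).isPreconnected
    (fun r hr => (hf r hr).differentiableAt.differentiableWithinAt)
    (fun r hr => (hf r hr).deriv) hx hy

/-- Matched exterior solution of the linearized f(𝕋,B) = 𝕋 − H²B/𝕋 field equations:
B(r) = kM/(3πr), A(r) = 2kM/(3πr), hence Eddington parameter γ = 1/2. -/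
theorem stmt_12 (k M R : ℝ) (hk : 0 < k) (hM : 0 < M) (hR : 0 < R)
    (A B : ℝ → ℝ)
    (hA : ∀ r > R, DifferentiableAt ℝ A r)
    (hB : ∀ r > R, DifferentiableAt ℝ B r)
    (hBode : ∀ r > R, B r + r * deriv B r = 0)
    (hBmatch : Tendsto B (nhdsWithin R (Set.Ioi R)) (nhds (k * M / (3 * Real.pi * R))))
    (hrel : ∀ r > R,
      4 * r * deriv (fun s => k * M / (12 * Real.pi * s)) r = B r + r * deriv A r)
    (hAlim : Tendsto A atTop (nhds 0)) :
    ∀ r > R, B r = k * M / (3 * Real.pi * r) ∧ A r = 2 * k * M / (3 * Real.pi * r) ∧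
      A r = 2 * B r ∧ (B r * r) / (A r * r) = 1 / 2 := by
  have hpi := Real.pi_pos
  have hBsol : ∀ r > R, B r = k * M / (3 * Real.pi * r) := by
    have hc := const_on_Ioi R (fun r => r * B r) (fun r hr => by
      have h := (hasDerivAt_id r).mul (hB r hr).hasDerivAt
      have e : (1 : ℝ) * B r + id r * deriv B r = 0 := by
        simpa using hBode r hr
      rw [e] at h
      exact h)
    intro r hr
    have hid : Tendsto (fun x : ℝ => x) (nhdsWithin R (Set.Ioi R)) (nhds R) :=
      tendsto_id.mono_left nhdsWithin_le_nhds
    have h1 := hid.mul hBmatch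
    have h2 : Tendsto (fun x : ℝ => x * B x) (nhdsWithin R (Set.Ioi R)) (nhds (r * B r)) := by
      refine tendsto_const_nhds.congr' ?_
      filter_upwards [self_mem_nhdsWithin] with x hx
      exact hc r hr x hx
    have h3 := tendsto_nhds_unique h2 h1
    have hr0 : 0 < r := hR.trans hr
    have h4 : R * (k * M / (3 * Real.pi * R)) = k * M / (3 * Real.pi) := by
      field_simp
    rw [h4] at h3
    rw [← div_div, ← h3]
    field_simp
  have hinv : ∀ (a b r : ℝ), 0 < b → 0 < r →
      HasDerivAt (fun s : ℝ => a / (b * s)) (-a / (b * r ^ 2)) r := by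
    intro a b r hb hr
    have h := (hasDerivAt_inv hr.ne').const_mul (a / b)
    have e : (fun s : ℝ => a / (b * s)) = fun s => a / b * s⁻¹ := by
      funext s
      rw [← div_div, div_eq_mul_inv (a / b)]
    rw [e]
    refine h.congr_deriv ?_
    rw [neg_div, ← div_div, div_eq_mul_inv (a / b), mul_neg]
  have hAsol : ∀ r > R, A r = 2 * k * M / (3 * Real.pi * r) := by
    have hc := const_on_Ioi R (fun r => A r - 2 * k * M / (3 * Real.pi * r)) (fun r hr => by
      have hr0 : 0 < r := hR.trans hr
      have h := (hA r hr).hasDerivAt.sub (hinv (2 * k * M) (3 * Real.pi) r (by positivity) hr0)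
      have e := hrel r hr
      rw [(hinv (k * M) (12 * Real.pi) r (by positivity) hr0).deriv, hBsol r hr] at e
      have e2 : deriv A r - -(2 * k * M) / (3 * Real.pi * r ^ 2) = 0 := by
        have e3 : r * deriv A r = 4 * r * (-(k * M) / (12 * Real.pi * r ^ 2))
          - k * M / (3 * Real.pi * r) := by linarith
        have e4 : deriv A r = (4 * r * (-(k * M) / (12 * Real.pi * r ^ 2))
          - k * M / (3 * Real.pi * r)) / r := by
          rw [← e3]; field_simp
        rw [e4]
        field_simp
        ring
      rw [e2] at h
      exact h)
    intro r hr
    have hl : Tendsto (fun s : ℝ => 2 * k * M / (3 * Real.pi * s)) atTop (nhds 0) :=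
      tendsto_const_nhds.div_atTop (tendsto_id.const_mul_atTop (by positivity))
    have h1 := hAlim.sub hl
    have h2 : Tendsto (fun s => A s - 2 * k * M / (3 * Real.pi * s)) atTop
        (nhds (A r - 2 * k * M / (3 * Real.pi * r))) := by
      refine tendsto_const_nhds.congr' ?_
      filter_upwards [eventually_gt_atTop R] with x hx
      exact hc r hr x hx
    have h3 := tendsto_nhds_unique h2 h1
    linarith
  intro r hr
  have hr0 : 0 < r := hR.trans hr
  refine ⟨hBsol r hr, hAsol r hr, ?_, ?_⟩
  · rw [hBsol r hr, hAsol r hr]; ring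
  · rw [hBsol r hr, hAsol r hr]; field_simp
end

section
/- Fix r > 0 and for 0 < H < 1/r define g_rr(H) = 1/(1 − H²r²), g_tt(H,s) = −(1 − H²s²) (as a function of the radius s), and 𝕋⁻(H) = (1 − √(g_rr(H)))·(2/(r²·g_rr(H)))·( r·(∂_s g_tt)(H,r)/g_tt(H,r) + 1 − √(g_rr(H)) ). Then lim_{H→0⁺} 𝕋⁻(H)/H⁴ = (5/2)·r². -/
open Filter

/-- The torsion scalar 𝕋⁻ of the Γ⁻ connection on static de Sitter expands as
𝕋⁻ = (5/2)H⁴r² + O(H⁶), i.e. 𝕋⁻/H⁴ → (5/2)r² as H → 0⁺. -/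
theorem stmt_16 (r : ℝ) (hr : 0 < r) :
    Tendsto (fun H : ℝ =>
        ((1 - Real.sqrt (1 / (1 - H ^ 2 * r ^ 2)))
            * (2 / (r ^ 2 * (1 / (1 - H ^ 2 * r ^ 2))))
            * (r * deriv (fun s => -(1 - H ^ 2 * s ^ 2)) r / (-(1 - H ^ 2 * r ^ 2))
                + 1 - Real.sqrt (1 / (1 - H ^ 2 * r ^ 2)))) / H ^ 4)
      (nhdsWithin 0 (Set.Ioi 0)) (nhds ((5 / 2) * r ^ 2)) := by
  have hlim : Tendsto (fun H : ℝ => 2 * r ^ 2 * (1 / (1 - H ^ 2 * r ^ 2))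
      * (1 / (1 + Real.sqrt (1 / (1 - H ^ 2 * r ^ 2))))
      * (2 + 1 / (1 + Real.sqrt (1 / (1 - H ^ 2 * r ^ 2)))))
      (nhdsWithin 0 (Set.Ioi 0)) (nhds ((5 / 2) * r ^ 2)) := by
    have h1 : ContinuousAt (fun H : ℝ => 1 / (1 - H ^ 2 * r ^ 2)) 0 := by
      apply ContinuousAt.div (by fun_prop) (by fun_prop)
      norm_num
    have h2 : ContinuousAt (fun H : ℝ => 1 / (1 + Real.sqrt (1 / (1 - H ^ 2 * r ^ 2)))) 0 := by
      apply ContinuousAt.div (by fun_prop) (continuousAt_const.add h1.sqrt)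
      norm_num
    have h3 := ((continuousAt_const (y := 2 * r ^ 2)).mul h1).mul h2 |>.mul
      ((continuousAt_const (y := (2 : ℝ))).add h2)
    have h4 := h3.tendsto.mono_left (nhdsWithin_le_nhds (s := Set.Ioi 0))
    convert h4 using 2
    simp only [Pi.mul_apply, Pi.add_apply]
    norm_num
    ring
  refine hlim.congr' ?_
  have hu : ∀ᶠ H : ℝ in nhdsWithin 0 (Set.Ioi 0), 0 < 1 - H ^ 2 * r ^ 2 := by
    apply nhdsWithin_le_nhds
    have hc : ContinuousAt (fun H : ℝ => 1 - H ^ 2 * r ^ 2) 0 := by fun_prop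
    exact hc.eventually (lt_mem_nhds (by norm_num))
  filter_upwards [hu, self_mem_nhdsWithin] with H hu hH
  have hH : 0 < H := hH
  have hd : deriv (fun s : ℝ => -(1 - H ^ 2 * s ^ 2)) r = 2 * H ^ 2 * r := by
    have h := (((hasDerivAt_pow 2 r).const_mul (H ^ 2)).const_sub 1).neg
    refine HasDerivAt.deriv (f := fun s : ℝ => -(1 - H ^ 2 * s ^ 2)) (h.congr_deriv ?_)
    norm_num
    ring
  rw [hd]
  have hq0 := Real.sqrt_nonneg (1 / (1 - H ^ 2 * r ^ 2))
  have hq2 := Real.sq_sqrt (one_div_pos.mpr hu).le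
  generalize Real.sqrt (1 / (1 - H ^ 2 * r ^ 2)) = q at *
  have hq1 : 1 + q ≠ 0 := by positivity
  have hune := hu.ne'
  have e : q = 1 + (H ^ 2 * r ^ 2 / (1 - H ^ 2 * r ^ 2)) * (1 / (1 + q)) := by
    field_simp at hq2 ⊢
    linear_combination hq2
  have e2 : 1 - q = -((H ^ 2 * r ^ 2 / (1 - H ^ 2 * r ^ 2)) * (1 / (1 + q))) := by
    linear_combination -e
  rw [add_sub_assoc, e2]
  generalize 1 / (1 + q) = p
  generalize 1 - H ^ 2 * r ^ 2 = u at *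
  field_simp
  ring
end

section
/- Let k > 0, M > 0, R > 0 and f₀ ≠ 0. Suppose A, B : (R,∞) → ℝ are differentiable with: B(r) + r·B'(r) = 0 for all r > R; B(r) → k·M/(6π·f₀·R) as r → R⁺; B(r) + r·A'(r) + k·M/(6π·f₀·r) = 0 for all r > R; and A(r) → 0 as r → ∞. Then for all r > R, B(r) = k·M/(6π·f₀·r) and A(r) = k·M/(3π·f₀·r); in particular A(r) = 2·B(r), so the Eddington parameter γ equals 1/2. -/
open Filter

theorem const_of_hasDerivAt_zero (R : ℝ) (f : ℝ → ℝ)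
    (h : ∀ x > R, HasDerivAt f 0 x) : ∀ x > R, ∀ y > R, f x = f y := by
  intro x hx y hy
  exact isOpen_Ioi.is_const_of_deriv_eq_zero (s := Set.Ioi R) isPreconnected_Ioi
    (fun z hz => (h z hz).differentiableAt.differentiableWithinAt)
    (fun z hz => (h z hz).deriv) hx hy

/-- Core of the γ = 1/2 theorem for general f(𝕋,B) / f(ℚ,C): the matched exterior
solution has B(r) = kM/(6πf₀r), A(r) = kM/(3πf₀r), hence A = 2B and γ = 1/2. -/
theorem stmt_18 (k M R f₀ : ℝ) (hk : 0 < k) (hM : 0 < M) (hR : 0 < R) (hf₀ : f₀ ≠ 0)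
    (A B : ℝ → ℝ)
    (hA : ∀ r > R, DifferentiableAt ℝ A r)
    (hB : ∀ r > R, DifferentiableAt ℝ B r)
    (hBode : ∀ r > R, B r + r * deriv B r = 0)
    (hBmatch : Tendsto B (nhdsWithin R (Set.Ioi R))
      (nhds (k * M / (6 * Real.pi * f₀ * R))))
    (hrel : ∀ r > R, B r + r * deriv A r + k * M / (6 * Real.pi * f₀ * r) = 0)
    (hAlim : Tendsto A atTop (nhds 0)) :
    ∀ r > R, B r = k * M / (6 * Real.pi * f₀ * r) ∧
      A r = k * M / (3 * Real.pi * f₀ * r) ∧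
      A r = 2 * B r ∧ B r / A r = 1 / 2 := by
  have hpi := Real.pi_pos
  have hpi0 : Real.pi ≠ 0 := hpi.ne'
  have hR0 : R ≠ 0 := hR.ne'
  have hBr : ∀ r > R, B r = k * M / (6 * Real.pi * f₀ * r) := by
    intro r hr
    have hr0 : r ≠ 0 := (hR.trans hr).ne'
    have hc := const_of_hasDerivAt_zero R (fun x => x * B x) (fun x hx => by
      have h := (hasDerivAt_id' x).mul (hB x hx).hasDerivAt
      have e : 1 * B x + x * deriv B x = 0 := by linarith [hBode x hx]
      rw [e] at h
      exact h)
    have h1 : Tendsto (fun x => x * B x) (nhdsWithin R (Set.Ioi R))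
        (nhds (R * (k * M / (6 * Real.pi * f₀ * R)))) :=
      (tendsto_id.mono_left nhdsWithin_le_nhds).mul hBmatch
    have h2 : Tendsto (fun x => x * B x) (nhdsWithin R (Set.Ioi R)) (nhds (r * B r)) := by
      refine tendsto_const_nhds.congr' ?_
      filter_upwards [self_mem_nhdsWithin] with x hx
      exact hc r hr x hx
    have h3 := tendsto_nhds_unique h2 h1
    have h4 : R * (k * M / (6 * Real.pi * f₀ * R)) = k * M / (6 * Real.pi * f₀) := by
      field_simp
    rw [h4] at h3
    rw [← div_div, ← h3]
    field_simp
  have hAr : ∀ r > R, A r = k * M / (3 * Real.pi * f₀ * r) := by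
    intro r hr
    have hc := const_of_hasDerivAt_zero R
      (fun x => A x - k * M / (3 * Real.pi * f₀) * x⁻¹) (fun x hx => by
      have hx0 : x ≠ 0 := (hR.trans hx).ne'
      have h := (hA x hx).hasDerivAt.sub
        ((hasDerivAt_inv hx0).const_mul (k * M / (3 * Real.pi * f₀)))
      have e : deriv A x - k * M / (3 * Real.pi * f₀) * (-(x ^ 2)⁻¹) = 0 := by
        have h5 := hrel x hx
        rw [hBr x hx] at h5
        have h6 : deriv A x = -(2 * (k * M / (6 * Real.pi * f₀ * x))) / x := by
          rw [eq_div_iff hx0]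
          linarith
        rw [h6]
        field_simp
        ring
      rw [e] at h
      exact h)
    have h1 : Tendsto (fun x => A x - k * M / (3 * Real.pi * f₀) * x⁻¹) atTop
        (nhds (0 - k * M / (3 * Real.pi * f₀) * 0)) :=
      hAlim.sub (tendsto_inv_atTop_zero.const_mul _)
    have h2 : Tendsto (fun x => A x - k * M / (3 * Real.pi * f₀) * x⁻¹) atTop
        (nhds (A r - k * M / (3 * Real.pi * f₀) * r⁻¹)) := by
      refine tendsto_const_nhds.congr' ?_
      filter_upwards [eventually_gt_atTop R] with x hx
      exact hc r hr x hx
    have h3 := tendsto_nhds_unique h2 h1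
    rw [← div_div, div_eq_mul_inv _ r]
    linarith
  intro r hr
  have hr0 : r ≠ 0 := (hR.trans hr).ne'
  have hk0 := hk.ne'
  have hM0 := hM.ne'
  refine ⟨hBr r hr, hAr r hr, ?_, ?_⟩
  · rw [hBr r hr, hAr r hr]
    field_simp
    norm_num
  · rw [hBr r hr, hAr r hr]
    field_simp
    norm_num
end
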